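/- arXiv:2303.10503 — 2 statements merged into one kernel-verified Lean document; each statement's English description precedes it below -/
import Mathlib

section
/- Let L > 0, β ∈ [0, 1], γ = 2(1+β)/L, and a ∈ ℝ with a ≠ 0. Consider f : ℝ → ℝ, f(x) = (L/2)x². Then the heavy-ball sequence defined by x_0 = a, x_1 = −a, and x_{t+1} = x_t + β(x_t − x_{t−1}) − γ f'(x_t) for t ≥ 1 satisfies x_t = (−1)^t a for all t; in particular it is 2-cyclic and non-constant, so heavy-ball with these parameters does not converge on this L-smooth convex function. -/
/-!
At `±a` the gradient step is `γ L (±a) = 2 (1 + β) (±a)`: the part `2 β (±a)` cancels the momentum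
term and the part `2 (±a)` reflects the iterate to `∓a`. So `(-1)^t a` satisfies the recursion, and
it is the trajectory since the first two terms determine a heavy-ball sequence. A periodic sequence
that converges is constant, which this one is not.
-/

open Filter Topology

theorem eq_of_periodic_of_tendsto_atTop {X : Type*} [TopologicalSpace X] [T2Space X]
    {x : ℕ → X} {c : ℕ} {l : X} (hx : Function.Periodic x c) (hc : 0 < c)
    (hl : Tendsto x atTop (𝓝 l)) (t : ℕ) : x t = l := by
  have hshift : Tendsto (fun n : ℕ => t + n • c) atTop atTop :=
    tendsto_atTop_mono (fun _ => Nat.le_add_left _ t) (tendsto_id.atTop_nsmul_const hc)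
  exact tendsto_nhds_unique (tendsto_const_nhds.congr fun n => (hx.nsmul n t).symm) (hl.comp hshift)

theorem periodic_neg_one_pow_smul {R E : Type*} [Monoid R] [HasDistribNeg R] [SMul R E] (a : E) :
    Function.Periodic (fun t : ℕ => (-1 : R) ^ t • a) 2 := fun t => by
  simp only [pow_add, even_two.neg_one_pow, mul_one]

section HeavyBall

variable {R E : Type*} [AddCommGroup E]

/-- The sequence `x` follows the heavy-ball recursion with momentum `β` and step-size `γ` for the
gradient field `g`. Times are shifted by one so that no truncated subtraction `t - 1` occurs. -/
def IsHeavyBallSequence [SMul R E] (β γ : R) (g : E → E) (x : ℕ → E) : Prop :=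
  ∀ t, x (t + 2) = x (t + 1) + β • (x (t + 1) - x t) - γ • g (x (t + 1))

theorem IsHeavyBallSequence.eq_of_init_eq [SMul R E] {β γ : R} {g : E → E} {x y : ℕ → E}
    (hx : IsHeavyBallSequence β γ g x) (hy : IsHeavyBallSequence β γ g y)
    (h0 : x 0 = y 0) (h1 : x 1 = y 1) : x = y := by
  funext t
  induction t using Nat.twoStepInduction with
  | zero => exact h0
  | one => exact h1
  | more t iht iht1 => rw [hx, hy, iht, iht1]

theorem isHeavyBallSequence_neg_one_pow_smul [Ring R] [Module R E] {β γ : R} {g : E → E} {a : E}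
    (hodd : g (-a) = -g a) (hstep : γ • g a = (2 * (1 + β)) • a) :
    IsHeavyBallSequence β γ g fun t => (-1 : R) ^ t • a := by
  have hsplit : γ • g a = a + β • a + (a + β • a) := by
    rw [hstep, two_mul, add_smul, add_smul, one_smul]
  intro t
  rcases neg_one_pow_eq_or R t with ht | ht <;>
    simp only [pow_succ, ht, mul_neg, mul_one, neg_neg, one_smul, neg_smul, hodd, smul_sub,
      smul_neg, hsplit] <;>
    abel

end HeavyBall

theorem convexOn_const_mul_norm_sq {E : Type*} [SeminormedAddCommGroup E] [NormedSpace ℝ E]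
    {c : ℝ} (hc : 0 ≤ c) : ConvexOn ℝ Set.univ fun y : E => c * ‖y‖ ^ 2 :=
  (convexOn_univ_norm.pow (fun y _ => norm_nonneg y) 2).smul hc

section Hilbert

variable {E : Type*} [NormedAddCommGroup E] [InnerProductSpace ℝ E] [CompleteSpace E]

theorem gradient_const_mul_norm_sq (c : ℝ) :
    gradient (fun y : E => c * ‖y‖ ^ 2) = fun y => (2 * c) • y := by
  refine gradient_eq fun y => hasGradientAt_iff_hasFDerivAt.2 ?_
  refine ((hasStrictFDerivAt_norm_sq y).hasFDerivAt.const_mul c).congr_fderiv ?_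
  ext z
  simp only [smul_apply, coe_innerSL_apply, nsmul_eq_mul, Nat.cast_ofNat, smul_eq_mul, map_smul,
    InnerProductSpace.toDual_apply_apply]
  ring

theorem heavy_ball_boundary_two_cycle_general {L β γ : ℝ} {a : E} (hL : 0 < L)
    (hγ : γ = 2 * (1 + β) / L) (ha : a ≠ 0)
    {f : E → ℝ} (hf : f = fun y => L / 2 * ‖y‖ ^ 2)
    {x : ℕ → E} (hx0 : x 0 = a) (hx1 : x 1 = -a)
    (hx : IsHeavyBallSequence β γ (gradient f) x) :
    ConvexOn ℝ Set.univ f ∧ LipschitzWith (Real.toNNReal L) (gradient f) ∧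
      (∀ t, x t = (-1 : ℝ) ^ t • a) ∧ Function.Periodic x 2 ∧
      (∃ s t, x s ≠ x t) ∧ ¬∃ l, Tendsto x atTop (𝓝 l) := by
  have hgrad : gradient f = fun y => L • y := by
    rw [hf, gradient_const_mul_norm_sq, mul_div_cancel₀ L two_ne_zero]
  have hstep : γ • L • a = (2 * (1 + β)) • a := by
    rw [smul_smul, hγ, div_mul_cancel₀ _ hL.ne']
  rw [hgrad] at hx ⊢
  have hx_eq : x = fun t => (-1 : ℝ) ^ t • a :=
    hx.eq_of_init_eq (isHeavyBallSequence_neg_one_pow_smul (smul_neg L a) hstep)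
      (by simpa using hx0) (by simpa using hx1)
  have hper : Function.Periodic x 2 := hx_eq ▸ periodic_neg_one_pow_smul a
  have : IsAddTorsionFree E := .of_isTorsionFree ℝ E
  have hne : x 0 ≠ x 1 := by rwa [hx0, hx1, Ne, self_eq_neg]
  refine ⟨hf ▸ convexOn_const_mul_norm_sq (half_pos hL).le, ?_, congrFun hx_eq, hper,
    ⟨0, 1, hne⟩, fun ⟨l, hl⟩ => hne ?_⟩
  · exact Real.toNNReal_eq_nnnorm_of_nonneg hL.le ▸ lipschitzWith_smul L
  · have hconst := eq_of_periodic_of_tendsto_atTop hper two_pos hl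
    rw [hconst 0, hconst 1]

end Hilbert

/-- For `γ = 2(1+β)/L` on the boundary of the heavy-ball
convergence region, the heavy-ball trajectory on the convex `L`-smooth quadratic
`f(x) = (L/2) x²` started at `x₀ = a`, `x₁ = -a` satisfies `x t = (-1)^t a`:
it is 2-cyclic, non-constant, hence does not converge. -/
theorem heavy_ball_boundary_two_cycle (L β γ a : ℝ) (hL : 0 < L)
    (hβ : β ∈ Set.Icc (0 : ℝ) 1)
    (hγ : γ = 2 * (1 + β) / L) (ha : a ≠ 0)
    (f : ℝ → ℝ) (hf : f = fun x => L / 2 * x ^ 2)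
    (x : ℕ → ℝ) (hx0 : x 0 = a) (hx1 : x 1 = -a)
    (hrec : ∀ t, 1 ≤ t → x (t + 1) =
      x t + β * (x t - x (t - 1)) - γ * deriv f (x t)) :
    ConvexOn ℝ Set.univ f ∧ LipschitzWith (Real.toNNReal L) (deriv f) ∧
      (∀ t, x t = (-1) ^ t * a) ∧ (∀ t, x (t + 2) = x t) ∧
      (∃ s t, x s ≠ x t) ∧ ¬∃ l, Filter.Tendsto x Filter.atTop (nhds l) := by
  have hgrad : gradient f = deriv f := funext fun _ => gradient_eq_deriv'
  exact hgrad ▸ heavy_ball_boundary_two_cycle_general hL hγ ha (by simpa using hf) hx0 hx1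
    fun t => by simpa [hgrad] using hrec (t + 1) t.succ_pos
end

section
/- For every ρ ∈ (0, 4], the function f_ρ is twice differentiable on ℝ and its second derivative f_ρ'' is Lipschitz continuous with constant 2ρ (i.e. f_ρ is 2ρ-Hessian-Lipschitz). -/
/-- The piecewise function `f_ρ` from the paper's discussion of the logistic map
embedded in gradient descent with step-size 1. -/
noncomputable def frho (ρ : ℝ) (x : ℝ) : ℝ :=
  if |x| ≤ 1 then
    ρ / 3 * |x| ^ 3 + (1 - ρ) / 2 * x ^ 2 + (ρ - 1) ^ 3 / (6 * ρ ^ 2)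
  else if |x| ≤ 3 / 2 then
    -(ρ / 3) * |x| ^ 3 + (1 + 3 * ρ) / 2 * x ^ 2 - 2 * ρ * |x| +
      ((ρ - 1) ^ 3 + 4 * ρ ^ 3) / (6 * ρ ^ 2)
  else
    1 / 2 * x ^ 2 + ρ / 4 * |x| + (4 * (ρ - 1) ^ 3 - 11 * ρ ^ 3) / (24 * ρ ^ 2)

/-!
The even function `frho ρ` is `F ∘ |·|`, where the three pieces glue to a cubic spline `F` whose
knots contribute the truncated powers `(t - 1)⁺ ^ 3` and `(t - 3 / 2)⁺ ^ 3`. Differentiating a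
truncated power of degree at least two merely lowers its exponent and rescales it, so `F''` is
`1 - ρ` plus `2ρ` times the degree-one spline `t - 2 (t - 1)⁺ + (t - 3 / 2)⁺`, which is
`1`-Lipschitz as its slopes are `1`, `-1`, `0`. Since `F' 0 = 0`, the second derivative of `F ∘ |·|`
is `F'' ∘ |·|` also at the origin.
-/

open Set

section Gluing

variable {E : Type*} [NormedAddCommGroup E] [NormedSpace ℝ E]

theorem hasDerivAt_of_eqOn_Iic_Ici {f l r : ℝ → E} {f' : E} {a x : ℝ}
    (hfl : EqOn f l (Iic a)) (hfr : EqOn f r (Ici a))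
    (hl : x ≤ a → HasDerivAt l f' x) (hr : a ≤ x → HasDerivAt r f' x) : HasDerivAt f f' x := by
  rcases lt_trichotomy x a with hx | rfl | hx
  · exact (hl hx.le).congr_of_eventuallyEq (hfl.eventuallyEq_of_mem (Iic_mem_nhds hx))
  · have hleft := (hl le_rfl).hasDerivWithinAt.congr hfl (hfl self_mem_Iic)
    have hright := (hr le_rfl).hasDerivWithinAt.congr hfr (hfr self_mem_Ici)
    simpa only [Iic_union_Ici, hasDerivWithinAt_univ] using hleft.union hright
  · exact (hr hx.le).congr_of_eventuallyEq (hfr.eventuallyEq_of_mem (Ici_mem_nhds hx))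

theorem hasDerivAt_posPart_pow (n : ℕ) (x : ℝ) :
    HasDerivAt (fun y : ℝ => y⁺ ^ (n + 2)) ((n + 2) * x⁺ ^ (n + 1)) x := by
  refine hasDerivAt_of_eqOn_Iic_Ici (a := 0) (l := fun _ => 0) (r := fun y => y ^ (n + 2))
    (fun y (hy : y ≤ 0) => by simp [posPart_of_nonpos hy])
    (fun y (hy : 0 ≤ y) => by simp only [posPart_of_nonneg hy])
    (fun hx => ?_) (fun hx => ?_)
  · simpa [posPart_of_nonpos hx] using hasDerivAt_const x (0 : ℝ)
  · simpa [posPart_of_nonneg hx] using hasDerivAt_pow (n + 2) x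

variable {F : ℝ → E} {d : E} {x : ℝ}

theorem hasDerivAt_comp_abs (hF : HasDerivAt F d |x|) (hd : x = 0 → d = 0) :
    HasDerivAt (fun y => F |y|) ((SignType.sign x : ℝ) • d) x := by
  refine hasDerivAt_of_eqOn_Iic_Ici (a := 0) (l := fun y => F (-y)) (r := F)
    (fun y (hy : y ≤ 0) => by simp only [abs_of_nonpos hy])
    (fun y (hy : 0 ≤ y) => by simp only [abs_of_nonneg hy])
    (fun hx => ?_) (fun hx => ?_)
  · rw [abs_of_nonpos hx] at hF
    refine (hF.scomp x (hasDerivAt_neg x)).congr_deriv ?_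
    rcases hx.eq_or_lt with hx | hx <;> simp [hx, hd]
  · rw [abs_of_nonneg hx] at hF
    refine hF.congr_deriv ?_
    rcases hx.eq_or_lt' with hx | hx <;> simp [hx, hd]

theorem hasDerivAt_sign_smul_comp_abs (hF : HasDerivAt F d |x|) (hF₀ : F 0 = 0) :
    HasDerivAt (fun y => (SignType.sign y : ℝ) • F |y|) d x := by
  refine hasDerivAt_of_eqOn_Iic_Ici (a := 0) (l := fun y => -F (-y)) (r := F)
    (fun y (hy : y ≤ 0) => ?_) (fun y (hy : 0 ≤ y) => ?_) (fun hx => ?_) (fun hx => ?_)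
  · rcases hy.eq_or_lt with rfl | hy
    · simp [hF₀]
    · simp [hy, abs_of_neg hy]
  · rcases hy.eq_or_lt with rfl | hy
    · simp [hF₀]
    · simp [hy, abs_of_pos hy]
  · rw [abs_of_nonpos hx] at hF
    simpa using! (hF.scomp x (hasDerivAt_neg x)).neg
  · rwa [abs_of_nonneg hx] at hF

end Gluing

section KneeSpline

/-- The spline `t ^ n - 2 (t - 1)⁺ ^ n + (t - 3 / 2)⁺ ^ n` with the breakpoints of `frho`. Up to
normalization, the non-quadratic parts of `frho ρ` and of its first two derivatives at `t ≥ 0` are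
the cases `n = 3, 2, 1`; the first term is the plain power `t ^ n`, as only `t ≥ 0` matters. -/
noncomputable def kneeSpline (n : ℕ) (t : ℝ) : ℝ :=
  t ^ n - 2 * (t - 1)⁺ ^ n + (t - 3 / 2)⁺ ^ n

theorem hasDerivAt_kneeSpline (n : ℕ) (t : ℝ) :
    HasDerivAt (kneeSpline (n + 2)) ((n + 2) * kneeSpline (n + 1) t) t := by
  have hpow : HasDerivAt (fun s : ℝ => s ^ (n + 2)) ((n + 2) * t ^ (n + 1)) t := by
    simpa using hasDerivAt_pow (n + 2) t
  have hknot (c : ℝ) :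
      HasDerivAt (fun s => (s - c)⁺ ^ (n + 2)) ((n + 2) * (t - c)⁺ ^ (n + 1)) t :=
    (hasDerivAt_posPart_pow n (t - c)).comp_sub_const t c
  refine ((hpow.sub ((hknot 1).const_mul 2)).add (hknot (3 / 2))).congr_deriv ?_
  rw [kneeSpline]
  ring

theorem kneeSpline_of_le_one {n : ℕ} (hn : n ≠ 0) {t : ℝ} (ht : t ≤ 1) :
    kneeSpline n t = t ^ n := by
  rw [kneeSpline, posPart_of_nonpos (by linarith), posPart_of_nonpos (by linarith), zero_pow hn]
  ring

theorem kneeSpline_of_one_le_of_le {n : ℕ} (hn : n ≠ 0) {t : ℝ} (ht₁ : 1 ≤ t) (ht₂ : t ≤ 3 / 2) :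
    kneeSpline n t = t ^ n - 2 * (t - 1) ^ n := by
  rw [kneeSpline, posPart_of_nonneg (by linarith), posPart_of_nonpos (by linarith), zero_pow hn,
    add_zero]

theorem kneeSpline_of_three_halves_le (n : ℕ) {t : ℝ} (ht : 3 / 2 ≤ t) :
    kneeSpline n t = t ^ n - 2 * (t - 1) ^ n + (t - 3 / 2) ^ n := by
  rw [kneeSpline, posPart_of_nonneg (by linarith), posPart_of_nonneg (by linarith)]

theorem kneeSpline_one_eq_min_max (t : ℝ) :
    kneeSpline 1 t = min t (max (2 - t) (1 / 2)) := by
  rcases le_total t 1 with h₁ | h₁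
  · rw [kneeSpline_of_le_one one_ne_zero h₁, max_eq_left (by linarith), min_eq_left (by linarith)]
    ring
  rcases le_total t (3 / 2) with h₂ | h₂
  · rw [kneeSpline_of_one_le_of_le one_ne_zero h₁ h₂, max_eq_left (by linarith),
      min_eq_right (by linarith)]
    ring
  · rw [kneeSpline_of_three_halves_le 1 h₂, max_eq_right (by linarith), min_eq_right (by linarith)]
    ring

theorem lipschitzWith_kneeSpline_one : LipschitzWith 1 (kneeSpline 1) := by
  have hreflect : LipschitzWith 1 fun t : ℝ => 2 - t := by
    simpa using (LipschitzWith.const (2 : ℝ)).sub LipschitzWith.id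
  rw [funext kneeSpline_one_eq_min_max]
  simpa using LipschitzWith.id.min (hreflect.max_const (1 / 2))

end KneeSpline

section Frho

/-- The cubic spline `F` on the line such that `frho ρ x = F |x|` when `ρ ≠ 0`. -/
noncomputable def frhoProfile (ρ t : ℝ) : ℝ :=
  (ρ - 1) ^ 3 / (6 * ρ ^ 2) + (1 - ρ) / 2 * t ^ 2 + ρ / 3 * kneeSpline 3 t

/-- The derivative of `frhoProfile ρ`. -/
noncomputable def frhoProfileDeriv (ρ t : ℝ) : ℝ :=
  (1 - ρ) * t + ρ * kneeSpline 2 t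

theorem hasDerivAt_frhoProfile (ρ t : ℝ) :
    HasDerivAt (frhoProfile ρ) (frhoProfileDeriv ρ t) t := by
  refine ((((hasDerivAt_pow 2 t).const_mul ((1 - ρ) / 2)).const_add _).add
    ((hasDerivAt_kneeSpline 1 t).const_mul (ρ / 3))).congr_deriv ?_
  rw [frhoProfileDeriv]
  push_cast
  ring

theorem hasDerivAt_frhoProfileDeriv (ρ t : ℝ) :
    HasDerivAt (frhoProfileDeriv ρ) (1 - ρ + 2 * ρ * kneeSpline 1 t) t := by
  refine (((hasDerivAt_id t).const_mul (1 - ρ)).add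
    ((hasDerivAt_kneeSpline 0 t).const_mul ρ)).congr_deriv ?_
  push_cast
  ring

theorem frhoProfileDeriv_zero (ρ : ℝ) : frhoProfileDeriv ρ 0 = 0 := by
  simp [frhoProfileDeriv, kneeSpline_of_le_one]

variable {ρ : ℝ}

theorem frho_eq_frhoProfile_abs (hρ : ρ ≠ 0) (x : ℝ) : frho ρ x = frhoProfile ρ |x| := by
  rw [frho, frhoProfile, ← sq_abs x]
  split_ifs with h₁ h₂
  · rw [kneeSpline_of_le_one three_ne_zero h₁]
    ring
  · rw [kneeSpline_of_one_le_of_le three_ne_zero (le_of_not_ge h₁) h₂]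
    field_simp
    ring
  · rw [kneeSpline_of_three_halves_le 3 (le_of_not_ge h₂)]
    field_simp
    ring

theorem hasDerivAt_frho (hρ : ρ ≠ 0) (x : ℝ) :
    HasDerivAt (frho ρ) (SignType.sign x * frhoProfileDeriv ρ |x|) x := by
  rw [funext (frho_eq_frhoProfile_abs hρ)]
  refine hasDerivAt_comp_abs (hasDerivAt_frhoProfile ρ |x|) ?_
  rintro rfl
  rw [abs_zero, frhoProfileDeriv_zero]

theorem hasDerivAt_deriv_frho (hρ : ρ ≠ 0) (x : ℝ) :
    HasDerivAt (deriv (frho ρ)) (1 - ρ + 2 * ρ * kneeSpline 1 |x|) x := by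
  rw [deriv_eq (hasDerivAt_frho hρ)]
  exact hasDerivAt_sign_smul_comp_abs (hasDerivAt_frhoProfileDeriv ρ |x|) (frhoProfileDeriv_zero ρ)

theorem lipschitzWith_deriv_deriv_frho (hρ : ρ ≠ 0) :
    LipschitzWith (Real.toNNReal (2 * |ρ|)) (deriv (deriv (frho ρ))) := by
  rw [deriv_eq (hasDerivAt_deriv_frho hρ)]
  have hknee : LipschitzWith 1 fun x : ℝ => kneeSpline 1 |x| := by
    simpa using! lipschitzWith_kneeSpline_one.comp lipschitzWith_one_norm
  refine .of_dist_le' fun x y => ?_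
  calc dist (1 - ρ + 2 * ρ * kneeSpline 1 |x|) (1 - ρ + 2 * ρ * kneeSpline 1 |y|)
      = 2 * |ρ| * dist (kneeSpline 1 |x|) (kneeSpline 1 |y|) := by
        rw [dist_add_left, Real.dist_eq, ← mul_sub, abs_mul, abs_mul, abs_two, Real.dist_eq]
    _ ≤ 2 * |ρ| * dist x y := by
        gcongr
        simpa using hknee.dist_le_mul x y

theorem frho_hessian_lipschitz_general (hρ : ρ ≠ 0) :
    Differentiable ℝ (frho ρ) ∧ Differentiable ℝ (deriv (frho ρ)) ∧
      LipschitzWith (Real.toNNReal (2 * |ρ|)) (deriv (deriv (frho ρ))) :=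
  ⟨fun x => (hasDerivAt_frho hρ x).differentiableAt,
    fun x => (hasDerivAt_deriv_frho hρ x).differentiableAt, lipschitzWith_deriv_deriv_frho hρ⟩

end Frho

/-- For every `ρ ∈ (0, 4]`, `f_ρ` is twice differentiable and
its second derivative is Lipschitz with constant `2ρ` (`2ρ`-Hessian-Lipschitz). -/
theorem frho_hessian_lipschitz (ρ : ℝ) (hρ : ρ ∈ Set.Ioc (0 : ℝ) 4) :
    Differentiable ℝ (frho ρ) ∧ Differentiable ℝ (deriv (frho ρ)) ∧
      LipschitzWith (Real.toNNReal (2 * ρ)) (deriv (deriv (frho ρ))) := by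
  simpa only [abs_of_pos hρ.1] using frho_hessian_lipschitz_general hρ.1.ne'
end
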